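/- arXiv:0909.5648 — 2 statements merged into one kernel-verified Lean document; each statement's English description precedes it below -/
import Mathlib

section
/- Let p be an odd prime, let a be a positive integer, and let A, B be integers with Δ = A² - 4B and p ∤ 2BΔ. Then u_{p^a-(Δ/p^a)}(A,B) ≡ B^{((Δ/p)-(Δ/p^a))/2}·(Δ/p^{a-1})·u_{p-(Δ/p)}(A,B) (mod p²) and v_{p^a-(Δ/p^a)}(A,B) ≡ B^{((Δ/p)-(Δ/p^a))/2}·v_{p-(Δ/p)}(A,B) (mod p²), where negative powers of B are interpreted via the inverse of B in ℤ/p²ℤ. -/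
/-- The Lucas sequence `u_n(A,B)` with `u_0 = 0`, `u_1 = 1`,
`u_{n+1} = A u_n - B u_{n-1}`. -/
def lucasU (A B : ℤ) : ℕ → ℤ
  | 0 => 0
  | 1 => 1
  | n + 2 => A * lucasU A B (n + 1) - B * lucasU A B n

/-- The Lucas sequence `v_n(A,B)` with `v_0 = 2`, `v_1 = A`,
`v_{n+1} = A v_n - B v_{n-1}`. -/
def lucasV (A B : ℤ) : ℕ → ℤ
  | 0 => 2
  | 1 => A
  | n + 2 => A * lucasV A B (n + 1) - B * lucasV A B n

/-- `x ^ e` for `x` in `ℤ/nℤ` and an integer exponent `e`, negative powers being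
interpreted via the inverse in `ℤ/nℤ`. -/
def zmodZPow {n : ℕ} (x : ZMod n) (e : ℤ) : ZMod n :=
  x ^ e.toNat * x⁻¹ ^ (-e).toNat

/-!
The characteristic roots `ω`, `ω̄` of the Lucas recurrence live in `ℤ/p²ℤ[ω] / (ω² - Aω + B)`,
where `u_n` is the `ω`-coordinate of `ω ^ n` and `v_n` its trace, so the claim reduces to
congruences between powers of `ω`. Euler's criterion gives `2 ω ^ p ≡ A + (Δ/p)(ω - ω̄)` modulo
`p`, and congruence modulo `p` becomes equality modulo `p²` after raising to the `p`-th power.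

* If `(Δ/p) = 1`, then `ω ^ p ≡ ω`, so `ω ^ p ^ a = ω ^ p`. One factor `ω` can be cancelled even
  when it is not a unit, because `ω ^ (p (p - 1))` acts as the identity on multiples of `ω ^ 2`.
* If `(Δ/p) = -1`, then `ω ^ p ≡ ω̄`, so `ω ^ p ^ a` alternates between `ω ^ p` and `ω̄ ^ p`.
  Conjugation preserves the trace and negates the `ω`-coordinate, which produces the sign
  `(Δ/p^(a-1))`, and `ω ω̄ = B` accounts for the power of `B`.
* If `p ∣ Δ`, then `ω = c + d` with `c` a scalar and `p ∣ d ^ 2`, so that `ω ^ p ^ a = c ^ p`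
  for `a ≥ 2`, while `ω ^ p` has trace `2 c ^ p`.
-/

open QuadraticAlgebra NumberTheorySymbols

theorem zmodZPow_zero {n : ℕ} (x : ZMod n) : zmodZPow x 0 = 1 := by
  simp [zmodZPow]

theorem zmodZPow_neg_one {n : ℕ} (x : ZMod n) : zmodZPow x (-1) = x⁻¹ := by
  simp [zmodZPow]

section PrimeSqEqZero

variable {S : Type*} [CommRing S] {p : ℕ}

theorem pow_eq_pow_of_dvd_sub (hS : (p : S) ^ 2 = 0) {x y : S} (h : (p : S) ∣ x - y) :
    x ^ p = y ^ p := by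
  simpa [hS, sub_eq_zero] using dvd_sub_pow_of_dvd_sub h 1

theorem pow_pow_succ_eq_iterate (hS : (p : S) ^ 2 = 0) (σ : S →+* S) {x : S}
    (h : (p : S) ∣ x ^ p - σ x) (k : ℕ) : x ^ p ^ (k + 1) = σ^[k] (x ^ p) := by
  induction k with
  | zero => simp
  | succ k ih =>
    calc x ^ p ^ (k + 2) = (x ^ p ^ (k + 1)) ^ p := by rw [← pow_mul, ← pow_succ]
      _ = σ^[k] ((x ^ p) ^ p) := by rw [ih, iterate_map_pow σ k (x ^ p)]
      _ = σ^[k] (σ (x ^ p)) := by rw [pow_eq_pow_of_dvd_sub hS h, map_pow]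
      _ = σ^[k + 1] (x ^ p) := (Function.iterate_succ_apply σ k _).symm

theorem pow_pow_succ_eq_pow (hS : (p : S) ^ 2 = 0) {x : S} (h : (p : S) ∣ x ^ p - x) (k : ℕ) :
    x ^ p ^ (k + 1) = x ^ p := by
  simpa using pow_pow_succ_eq_iterate hS (RingHom.id S) h k

-- `E = x ^ (p * (p - 1))` is idempotent, and `x * (1 - E)` squares to zero since `p` divides it.
theorem sq_mul_pow_mul_pred_eq_sq (hp : 2 ≤ p) (hS : (p : S) ^ 2 = 0) {x : S}
    (h : (p : S) ∣ x ^ p - x) : x ^ 2 * x ^ (p * (p - 1)) = x ^ 2 := by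
  set E := x ^ (p * (p - 1)) with hE
  have fix : x ^ p * E = x ^ p := by
    have expo : p + p * (p - 1) = p * p := by
      rw [Nat.mul_sub_one, Nat.add_sub_cancel' (Nat.le_mul_self p)]
    rw [hE, ← pow_add, expo, pow_mul, pow_eq_pow_of_dvd_sub hS h]
  have idem : E * E = E := by
    obtain ⟨r, hr⟩ : x ^ p ∣ E := pow_dvd_pow x (Nat.le_mul_of_pos_right p (by omega))
    calc E * E = x ^ p * E * r := by linear_combination E * hr
      _ = E := by rw [fix, hr]
  have sq_zero : (x ^ p - x) ^ 2 = 0 := by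
    simpa [hS] using pow_dvd_pow_of_dvd h 2
  have mul_one_sub : x * (1 - E) = -((x ^ p - x) * (1 - E)) := by linear_combination -fix
  linear_combination x ^ 2 * idem - (x * (1 - E) - (x ^ p - x) * (1 - E)) * mul_one_sub
    - (1 - E) ^ 2 * sq_zero

theorem pow_eq_pow_of_pow_succ_eq (hp : 2 ≤ p) (hS : (p : S) ^ 2 = 0) {x : S}
    (h : (p : S) ∣ x ^ p - x) {m n : ℕ} (hm : 2 ≤ m) (hn : 2 ≤ n)
    (hmn : x ^ (m + 1) = x ^ (n + 1)) : x ^ m = x ^ n := by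
  have period {l : ℕ} (hl : 2 ≤ l) : x ^ l = x ^ (l + 1) * x ^ (p * (p - 1) - 1) := by
    have pos : 0 < p * (p - 1) := Nat.mul_pos (by omega) (by omega)
    rw [← pow_add, show l + 1 + (p * (p - 1) - 1) = l - 2 + (2 + p * (p - 1)) by omega,
      pow_add, pow_add x 2, sq_mul_pow_mul_pred_eq_sq hp hS h, ← pow_add, Nat.sub_add_cancel hl]
  rw [period hm, period hn, hmn]

theorem pow_pow_succ_sub_one_eq_pow (hp : 3 ≤ p) (hS : (p : S) ^ 2 = 0) {x : S}
    (h : (p : S) ∣ x ^ p - x) (k : ℕ) : x ^ (p ^ (k + 1) - 1) = x ^ (p - 1) := by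
  have hk : p ≤ p ^ (k + 1) := Nat.le_self_pow k.succ_ne_zero p
  apply pow_eq_pow_of_pow_succ_eq (by omega) hS h (by omega) (by omega)
  rw [Nat.sub_add_cancel (by omega), Nat.sub_add_cancel (by omega), pow_pow_succ_eq_pow hS h]

end PrimeSqEqZero

section Frobenius

variable {S : Type*} [CommRing S] {p : ℕ}

theorem natCast_dvd_intCast_of_zmod_eq_zero {m : ℤ} (h : (m : ZMod p) = 0) :
    (p : S) ∣ (m : S) := by
  simpa using Int.cast_dvd_cast (α := S) _ _ ((ZMod.intCast_zmod_eq_zero_iff_dvd m p).1 h)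

variable [hp : Fact p.Prime]

theorem natCast_dvd_intCast_pow_sub_self (m : ℤ) : (p : S) ∣ (m : S) ^ p - m := by
  have h : ((m ^ p - m : ℤ) : ZMod p) = 0 := by push_cast; rw [ZMod.pow_card, sub_self]
  simpa using natCast_dvd_intCast_of_zmod_eq_zero (S := S) h

theorem natCast_dvd_pow_sub_jacobiSym_mul (hp2 : p ≠ 2) {D : ℤ} {d : S} (hd : d ^ 2 = D) :
    (p : S) ∣ d ^ p - J(D | p) * d := by
  have euler : (p : S) ∣ (D : S) ^ (p / 2) - J(D | p) := by
    have h : ((D ^ (p / 2) - J(D | p) : ℤ) : ZMod p) = 0 := by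
      rw [← jacobiSym.legendreSym.to_jacobiSym, Int.cast_sub, legendreSym.eq_pow, Int.cast_pow,
        sub_self]
    simpa using natCast_dvd_intCast_of_zmod_eq_zero (S := S) h
  have pow_eq : d ^ p = (D : S) ^ (p / 2) * d := by
    rw [← hd, ← pow_mul, ← pow_succ, Nat.two_mul_div_two_add_one_of_odd (hp.out.odd_of_ne_two hp2)]
  rw [pow_eq, ← sub_mul]
  exact euler.mul_right d

theorem natCast_dvd_add_pow_sub (x y : S) : (p : S) ∣ (x + y) ^ p - (x ^ p + y ^ p) := by
  obtain ⟨r, hr⟩ := exists_add_pow_prime_eq hp.out x y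
  exact ⟨x * y * r, by rw [hr]; ring⟩

theorem natCast_dvd_of_dvd_two_mul (hp2 : p ≠ 2) {z : S} (h : (p : S) ∣ 2 * z) : (p : S) ∣ z :=
  (Nat.Coprime.cast (R := S) (hp.out.odd_of_ne_two hp2).coprime_two_right).dvd_of_dvd_mul_left h

-- Raise `2 * x = A + (x - y)` to the `p`-th power modulo `p`.
theorem natCast_dvd_two_mul_pow_sub (hp2 : p ≠ 2) {A B : ℤ} {x y : S} (hadd : x + y = A)
    (hmul : x * y = B) :
    (p : S) ∣ 2 * (x ^ p) - (A + J(A ^ 2 - 4 * B | p) * (x - y)) := by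
  have hd : (x - y) ^ 2 = ((A ^ 2 - 4 * B : ℤ) : S) := by
    push_cast
    rw [← hadd, ← hmul]
    ring
  have two_pow : (p : S) ∣ (2 : S) ^ p - 2 := by
    simpa using natCast_dvd_intCast_pow_sub_self (S := S) (p := p) 2
  have freshman : (p : S) ∣ (2 * x) ^ p - ((A : S) ^ p + (x - y) ^ p) := by
    have two_mul : 2 * x = A + (x - y) := by linear_combination hadd
    rw [two_mul]
    exact natCast_dvd_add_pow_sub _ _
  convert ((freshman.add (natCast_dvd_intCast_pow_sub_self A)).add
    (natCast_dvd_pow_sub_jacobiSym_mul hp2 hd)).sub (two_pow.mul_right (x ^ p)) using 1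
  ring

theorem natCast_dvd_pow_sub_self (hp2 : p ≠ 2) {A B : ℤ} {x y : S} (hadd : x + y = A)
    (hmul : x * y = B) (hJ : J(A ^ 2 - 4 * B | p) = 1) : (p : S) ∣ x ^ p - x := by
  apply natCast_dvd_of_dvd_two_mul hp2
  convert natCast_dvd_two_mul_pow_sub hp2 hadd hmul using 1
  rw [hJ, ← hadd]
  push_cast
  ring

theorem natCast_dvd_pow_sub_conj (hp2 : p ≠ 2) {A B : ℤ} {x y : S} (hadd : x + y = A)
    (hmul : x * y = B) (hJ : J(A ^ 2 - 4 * B | p) = -1) : (p : S) ∣ x ^ p - y := by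
  apply natCast_dvd_of_dvd_two_mul hp2
  convert natCast_dvd_two_mul_pow_sub hp2 hadd hmul using 1
  rw [hJ, ← hadd]
  push_cast
  ring

theorem add_pow_prime_eq_of_mul_sq_eq_zero {c d : S} (h : p * d ^ 2 = 0) :
    (c + d) ^ p = c ^ p + d ^ p + p * (c ^ (p - 1) * d) := by
  have hp1 := hp.out.one_lt
  rw [add_pow_prime_eq' hp.out, Finset.mul_sum, Finset.sum_eq_single (p - 1)]
  · rw [Nat.sub_sub_self hp.out.one_le, Nat.choose_symm hp.out.one_le]
    simp [Nat.div_self hp.out.pos]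
  · intro k hk hkp
    rw [Finset.mem_Ioo] at hk
    obtain ⟨j, hj⟩ : ∃ j, p - k = 2 + j := ⟨p - k - 2, by omega⟩
    rw [hj, pow_add]
    linear_combination c ^ k * d ^ j * ↑(p.choose k / p) * h
  · intro hnot
    exact absurd (Finset.mem_Ioo.2 ⟨by omega, by omega⟩) hnot

theorem add_pow_prime_add_sub_pow_prime (hp2 : p ≠ 2) {c d : S} (h : p * d ^ 2 = 0) :
    (c + d) ^ p + (c - d) ^ p = 2 * c ^ p := by
  have h_neg : p * (-d) ^ 2 = 0 := by rwa [neg_sq]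
  rw [sub_eq_add_neg, add_pow_prime_eq_of_mul_sq_eq_zero h,
    add_pow_prime_eq_of_mul_sq_eq_zero h_neg, (hp.out.odd_of_ne_two hp2).neg_pow]
  ring

theorem add_pow_prime_pow_add_two (hS : (p : S) ^ 2 = 0) {c d : S} (hc : (p : S) ∣ c ^ p - c)
    (hd : (p : S) ∣ d ^ 2) (k : ℕ) : (c + d) ^ p ^ (k + 2) = c ^ p := by
  have hdvd : (p : S) ∣ (c + d) ^ p - c ^ p := by
    convert (natCast_dvd_add_pow_sub c d).add (hd.trans (pow_dvd_pow d hp.out.two_le)) using 1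
    ring
  calc (c + d) ^ p ^ (k + 2) = (((c + d) ^ p) ^ p) ^ p ^ k := by ring
    _ = c ^ p ^ (k + 1 + 1) := by rw [pow_eq_pow_of_dvd_sub hS hdvd]; ring
    _ = c ^ p := pow_pow_succ_eq_pow hS hc (k + 1)

theorem isUnit_intCast_of_jacobiSym_eq_neg_one {A B : ℤ} (hJ : J(A ^ 2 - 4 * B | p) = -1) :
    IsUnit (B : ZMod (p ^ 2)) := by
  have not_dvd : ¬ (p : ℤ) ∣ B := by
    intro hB
    rw [ZMod.nonsquare_iff_jacobiSym_eq_neg_one] at hJ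
    refine hJ ⟨A, ?_⟩
    push_cast
    rw [(ZMod.intCast_zmod_eq_zero_iff_dvd B p).2 hB]
    ring
  rw [ZMod.coe_int_isUnit_iff_isCoprime, Nat.cast_pow]
  exact ((Nat.prime_iff_prime_int.1 hp.out).coprime_iff_not_dvd.2 not_dvd).pow_left

end Frobenius

/-- The ring `R[ω] / (ω² - Aω + B)`, whose generator `ω` and its conjugate `star ω` are the two
characteristic roots of the Lucas sequences with parameters `A` and `B`. It is free over `R` with
basis `1, ω` even when the characteristic polynomial has a repeated root. -/
abbrev LucasAlgebra (R : Type*) [CommRing R] (A B : ℤ) : Type _ :=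
  QuadraticAlgebra R (-(B : R)) (A : R)

namespace LucasAlgebra

section CommRing

variable {R : Type*} [CommRing R] {A B : ℤ}

theorem omega_add_star : (ω + star ω : LucasAlgebra R A B) = A := by
  rw [← algebraMap_trace_eq_add_star, trace_omega, map_intCast]

theorem omega_mul_star : (ω * star ω : LucasAlgebra R A B) = B := by
  ext <;> simp

theorem omega_pow_add_two (n : ℕ) :
    (ω : LucasAlgebra R A B) ^ (n + 2) = (A : R) • ω ^ (n + 1) - (B : R) • ω ^ n := by
  have sq : (ω : LucasAlgebra R A B) ^ 2 = (A : R) • ω - (B : R) • 1 := by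
    ext <;> simp [sq]
  rw [pow_add, sq, mul_sub, mul_smul_comm, mul_smul_comm, ← pow_succ, mul_one]

theorem im_omega_pow : ∀ n : ℕ, ((ω : LucasAlgebra R A B) ^ n).im = lucasU A B n
  | 0 => by simp [lucasU]
  | 1 => by simp [lucasU]
  | n + 2 => by
    rw [omega_pow_add_two, im_sub, im_smul, im_smul, im_omega_pow (n + 1), im_omega_pow n, lucasU]
    simp

theorem trace_omega_pow : ∀ n : ℕ, trace ((ω : LucasAlgebra R A B) ^ n) = lucasV A B n
  | 0 => by simp [lucasV]
  | 1 => by simp [lucasV]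
  | n + 2 => by
    rw [omega_pow_add_two, map_sub, map_smul, map_smul, trace_omega_pow (n + 1), trace_omega_pow n,
      lucasV]
    simp

theorem lucas_eq_of_omega_pow_eq {m n : ℕ} (h : (ω : LucasAlgebra R A B) ^ m = ω ^ n) :
    (lucasU A B m : R) = lucasU A B n ∧ (lucasV A B m : R) = lucasV A B n := by
  simp only [← im_omega_pow, ← trace_omega_pow, h, and_self]

theorem lucas_eq_of_omega_pow_eq_smul_star {m n : ℕ} {c : R}
    (h : (ω : LucasAlgebra R A B) ^ m = c • star (ω ^ n)) :
    (lucasU A B m : R) = -(c * lucasU A B n) ∧ (lucasV A B m : R) = c * lucasV A B n := by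
  simp only [← im_omega_pow, ← trace_omega_pow, h, im_smul, map_smul, im_star, trace_star,
    smul_eq_mul, mul_neg, and_self]

end CommRing

section ZModPrimeSq

variable {p : ℕ} {A B : ℤ}

theorem natCast_sq_eq_zero : (p : LucasAlgebra (ZMod (p ^ 2)) A B) ^ 2 = 0 := by
  rw [← map_natCast (algebraMap (ZMod (p ^ 2)) _), ← map_pow, ← Nat.cast_pow, ZMod.natCast_self,
    map_zero]

variable [hp : Fact p.Prime]

theorem omega_pow_of_jacobiSym_eq_one (hp2 : p ≠ 2) (hJ : J(A ^ 2 - 4 * B | p) = 1) (k : ℕ) :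
    (ω : LucasAlgebra (ZMod (p ^ 2)) A B) ^ (p ^ (k + 1) - 1) = ω ^ (p - 1) :=
  pow_pow_succ_sub_one_eq_pow (hp.out.two_le.lt_of_ne' hp2) natCast_sq_eq_zero
    (natCast_dvd_pow_sub_self hp2 omega_add_star omega_mul_star hJ) k

theorem omega_pow_of_jacobiSym_eq_neg_one (hp2 : p ≠ 2) (hJ : J(A ^ 2 - 4 * B | p) = -1) (k : ℕ) :
    (ω : LucasAlgebra (ZMod (p ^ 2)) A B) ^ p ^ (k + 1) = star^[k] (ω ^ p) :=
  pow_pow_succ_eq_iterate natCast_sq_eq_zero (starRingEnd _)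
    (natCast_dvd_pow_sub_conj hp2 omega_add_star omega_mul_star hJ) k

theorem omega_pow_add_one_of_even (hp2 : p ≠ 2) (hJ : J(A ^ 2 - 4 * B | p) = -1) {k : ℕ}
    (hk : Even k) : (ω : LucasAlgebra (ZMod (p ^ 2)) A B) ^ (p ^ (k + 1) + 1) = ω ^ (p + 1) := by
  rw [pow_succ ω, omega_pow_of_jacobiSym_eq_neg_one hp2 hJ, star_involutive.iterate_even hk, id,
    ← pow_succ]

theorem omega_pow_sub_one_of_odd (hp2 : p ≠ 2) (hJ : J(A ^ 2 - 4 * B | p) = -1) {k : ℕ}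
    (hk : Odd k) :
    (ω : LucasAlgebra (ZMod (p ^ 2)) A B) ^ (p ^ (k + 1) - 1) =
      (B : ZMod (p ^ 2))⁻¹ • star (ω ^ (p + 1)) := by
  have smul_eq : (B : ZMod (p ^ 2)) • (ω : LucasAlgebra (ZMod (p ^ 2)) A B) ^ (p ^ (k + 1) - 1) =
      star (ω ^ (p + 1)) := by
    calc (B : ZMod (p ^ 2)) • (ω : LucasAlgebra (ZMod (p ^ 2)) A B) ^ (p ^ (k + 1) - 1)
        = star ω * (ω * ω ^ (p ^ (k + 1) - 1)) := by
          rw [Algebra.smul_def, map_intCast, ← omega_mul_star]; ring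
      _ = star ω * star (ω ^ p) := by
          rw [mul_pow_sub_one (pow_ne_zero _ hp.out.ne_zero),
            omega_pow_of_jacobiSym_eq_neg_one hp2 hJ, star_involutive.iterate_odd hk]
      _ = star (ω ^ (p + 1)) := by rw [pow_succ ω, star_mul]
  rw [← smul_eq, smul_smul, ZMod.inv_mul_of_unit _ (isUnit_intCast_of_jacobiSym_eq_neg_one hJ),
    one_smul]

-- With `ω = c + d` and `star ω = c - d`, the discriminant is `4 * d ^ 2`.
theorem exists_omega_eq_of_jacobiSym_eq_zero (hp2 : p ≠ 2) (hJ : J(A ^ 2 - 4 * B | p) = 0) :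
    ∃ (c : ZMod (p ^ 2)) (d : LucasAlgebra (ZMod (p ^ 2)) A B),
      ω = algebraMap _ _ c + d ∧ star ω = algebraMap _ _ c - d ∧
        (p : LucasAlgebra (ZMod (p ^ 2)) A B) ∣ d ^ 2 := by
  have two_unit : IsUnit (2 : ZMod (p ^ 2)) := by
    exact_mod_cast (ZMod.isUnit_iff_coprime 2 (p ^ 2)).2
      (hp.out.odd_of_ne_two hp2).pow.coprime_two_left
  obtain ⟨c, hc⟩ : (2 : ZMod (p ^ 2)) ∣ A := two_unit.dvd
  have hsum : (ω : LucasAlgebra (ZMod (p ^ 2)) A B) + star ω = 2 * algebraMap _ _ c := by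
    rw [← algebraMap_trace_eq_add_star, trace_omega, hc, map_mul, map_ofNat]
  refine ⟨c, ω - algebraMap _ _ c, by ring, by linear_combination hsum, ?_⟩
  have disc_dvd : (p : LucasAlgebra (ZMod (p ^ 2)) A B) ∣ ((A ^ 2 - 4 * B : ℤ) :
      LucasAlgebra (ZMod (p ^ 2)) A B) := by
    apply natCast_dvd_intCast_of_zmod_eq_zero
    rwa [← legendreSym.eq_zero_iff, jacobiSym.legendreSym.to_jacobiSym]
  apply natCast_dvd_of_dvd_two_mul hp2
  apply natCast_dvd_of_dvd_two_mul hp2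
  convert disc_dvd using 1
  push_cast
  rw [← omega_add_star (R := ZMod (p ^ 2)), ← omega_mul_star (R := ZMod (p ^ 2))]
  linear_combination (2 * ω - 2 * algebraMap _ _ c + ω - star ω) * hsum

theorem lucas_pow_of_jacobiSym_eq_zero (hp2 : p ≠ 2) (hJ : J(A ^ 2 - 4 * B | p) = 0) (k : ℕ) :
    (lucasU A B (p ^ (k + 2)) : ZMod (p ^ 2)) = 0 ∧
      (lucasV A B (p ^ (k + 2)) : ZMod (p ^ 2)) = lucasV A B p := by
  obtain ⟨c, d, hω, hstar, hd⟩ := exists_omega_eq_of_jacobiSym_eq_zero hp2 hJ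
  have pow_eq : (ω : LucasAlgebra (ZMod (p ^ 2)) A B) ^ p ^ (k + 2) = algebraMap _ _ (c ^ p) := by
    obtain ⟨m, rfl⟩ := ZMod.intCast_surjective c
    rw [hω, map_pow]
    apply add_pow_prime_pow_add_two natCast_sq_eq_zero _ hd
    simpa using natCast_dvd_intCast_pow_sub_self m
  have trace_eq : trace ((ω : LucasAlgebra (ZMod (p ^ 2)) A B) ^ p) = 2 * c ^ p := by
    have p_mul : p * d ^ 2 = 0 := by
      obtain ⟨r, hr⟩ := hd
      rw [hr, ← mul_assoc, ← sq, natCast_sq_eq_zero, zero_mul]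
    apply algebraMap_injective (a := -(B : ZMod (p ^ 2))) (b := (A : ZMod (p ^ 2)))
    rw [algebraMap_trace_eq_add_star, star_pow, hstar, hω,
      add_pow_prime_add_sub_pow_prime hp2 p_mul, map_mul, map_pow, map_ofNat]
  rw [← im_omega_pow, ← trace_omega_pow, ← trace_omega_pow, pow_eq, trace_eq]
  exact ⟨algebraMap_im _, trace_algebraMap _⟩

end ZModPrimeSq

end LucasAlgebra

open LucasAlgebra

theorem stmt18_general (p : ℕ) (hp : p.Prime) (hp2 : p ≠ 2) (a : ℕ) (ha : 0 < a)
    (A B : ℤ) (Δ : ℤ) (hΔ : Δ = A ^ 2 - 4 * B) :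
    ((lucasU A B (((p : ℤ) ^ a - jacobiSym Δ (p ^ a)).toNat) : ℤ) : ZMod (p ^ 2)) =
      zmodZPow (B : ZMod (p ^ 2)) ((jacobiSym Δ p - jacobiSym Δ (p ^ a)) / 2) *
        (jacobiSym Δ (p ^ (a - 1)) : ZMod (p ^ 2)) *
        ((lucasU A B (((p : ℤ) - jacobiSym Δ p).toNat) : ℤ) : ZMod (p ^ 2)) ∧
    ((lucasV A B (((p : ℤ) ^ a - jacobiSym Δ (p ^ a)).toNat) : ℤ) : ZMod (p ^ 2)) =
      zmodZPow (B : ZMod (p ^ 2)) ((jacobiSym Δ p - jacobiSym Δ (p ^ a)) / 2) *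
        ((lucasV A B (((p : ℤ) - jacobiSym Δ p).toNat) : ℤ) : ZMod (p ^ 2)) := by
  have := Fact.mk hp
  subst hΔ
  obtain ⟨k, rfl⟩ : ∃ k, a = k + 1 := ⟨a - 1, by omega⟩
  have toNat_pow (n : ℕ) : ((p : ℤ) ^ n).toNat = p ^ n := mod_cast Int.toNat_natCast (p ^ n)
  have toNat_pow_succ (n : ℕ) : ((p : ℤ) ^ n + 1).toNat = p ^ n + 1 :=
    mod_cast Int.toNat_natCast (p ^ n + 1)
  simp only [jacobiSym.pow_right, Nat.add_sub_cancel]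
  rcases jacobiSym.trichotomy (A ^ 2 - 4 * B) p with hJ | hJ | hJ
  · cases k with
    | zero => simp [hJ, zmodZPow_zero]
    | succ k => simpa [hJ, toNat_pow, zmodZPow_zero] using lucas_pow_of_jacobiSym_eq_zero hp2 hJ k
  · simpa [hJ, toNat_pow, zmodZPow_zero] using
      lucas_eq_of_omega_pow_eq (omega_pow_of_jacobiSym_eq_one hp2 hJ k)
  · rcases k.even_or_odd with hk | hk
    · simpa [hJ, hk.neg_one_pow, hk.add_one.neg_one_pow, toNat_pow_succ, zmodZPow_zero] using
        lucas_eq_of_omega_pow_eq (omega_pow_add_one_of_even hp2 hJ hk)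
    · simpa [hJ, hk.neg_one_pow, hk.add_one.neg_one_pow, toNat_pow, zmodZPow_neg_one] using
        lucas_eq_of_omega_pow_eq_smul_star (omega_pow_sub_one_of_odd hp2 hJ hk)

theorem stmt18 (p : ℕ) (hp : p.Prime) (hp2 : p ≠ 2) (a : ℕ) (ha : 0 < a)
    (A B : ℤ) (Δ : ℤ) (hΔ : Δ = A ^ 2 - 4 * B)
    (h : ¬ (p : ℤ) ∣ 2 * B * Δ) :
    ((lucasU A B (((p : ℤ) ^ a - jacobiSym Δ (p ^ a)).toNat) : ℤ) : ZMod (p ^ 2)) =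
      zmodZPow (B : ZMod (p ^ 2)) ((jacobiSym Δ p - jacobiSym Δ (p ^ a)) / 2) *
        (jacobiSym Δ (p ^ (a - 1)) : ZMod (p ^ 2)) *
        ((lucasU A B (((p : ℤ) - jacobiSym Δ p).toNat) : ℤ) : ZMod (p ^ 2)) ∧
    ((lucasV A B (((p : ℤ) ^ a - jacobiSym Δ (p ^ a)).toNat) : ℤ) : ZMod (p ^ 2)) =
      zmodZPow (B : ZMod (p ^ 2)) ((jacobiSym Δ p - jacobiSym Δ (p ^ a)) / 2) *
        ((lucasV A B (((p : ℤ) - jacobiSym Δ p).toNat) : ℤ) : ZMod (p ^ 2)) :=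
  stmt18_general p hp hp2 a ha A B Δ hΔ
end

section
/- Let p be an odd prime, and let a, m be integers with a > 0 and p ∤ m. Set Δ = m² - 4m. Then 2u_{p^a}(m,m) - u_{p^a}(m-2,1) ≡ (Δ/p^a)·m^{p-1} + u_{p^a-(Δ/p^a)}(m-2,1) (mod p²). -/
/-! Write `q = p ^ a = 2 * k + 1`, `ε = (Δ/q)`, `w = m ^ k`, and let `x`, `y` be the values of
`u(m - 2, 1)` at `k + 1` and `k`. Bisecting `u(m, m)` gives `u_q(m, m) = w * (x + y)`, while
`u_q(m - 2, 1) = (x + y) * (x - y)`. The Frobenius map on `𝔽_p[ω] / (ω ^ 2 - A * ω + B)` determines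
`u_q(A, B)` and `u_{q+1}(A, B)` modulo `p`; for `A = B = m` this says `x + y ≡ ε * w` and
`x - y ≡ w`. Since `w ^ 2 ≡ m ^ (p - 1)` modulo `p ^ 2`, the two sides differ modulo `p ^ 2` by a
combination of products of two multiples of `p`: `(x + y) * (x - y - w)` if `ε = 0`,
`(x + y - w) ^ 2` and `y ^ 2` if `ε = 1`, `(x + y + w) ^ 2` and `x ^ 2` if `ε = -1`. -/

section Identities

variable (A B : ℤ)

theorem lucasU_add_two (n : ℕ) :
    lucasU A B (n + 2) = A * lucasU A B (n + 1) - B * lucasU A B n := rfl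

theorem lucasU_add_add_one (n k : ℕ) :
    lucasU A B (n + k + 1) =
      lucasU A B (n + 1) * lucasU A B (k + 1) - B * (lucasU A B n * lucasU A B k) := by
  induction k generalizing n with
  | zero => simp [lucasU]
  | succ k ih =>
    rw [show n + (k + 1) + 1 = n + 1 + k + 1 by ring, ih, lucasU_add_two, lucasU_add_two]
    ring

theorem lucasU_two_mul_add_one (k : ℕ) :
    lucasU A B (2 * k + 1) = lucasU A B (k + 1) ^ 2 - B * lucasU A B k ^ 2 := by
  rw [two_mul, lucasU_add_add_one]
  ring

theorem lucasU_two_mul_add_two (k : ℕ) :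
    lucasU A B (2 * k + 2) =
      lucasU A B (k + 1) * (A * lucasU A B (k + 1) - 2 * B * lucasU A B k) := by
  rw [show 2 * k + 2 = k + (k + 1) + 1 by ring, lucasU_add_add_one, lucasU_add_two]
  ring

theorem lucasU_two_mul (k : ℕ) :
    lucasU A B (2 * k) = lucasU A B k * (2 * lucasU A B (k + 1) - A * lucasU A B k) := by
  cases k with
  | zero => simp [lucasU]
  | succ k =>
    rw [mul_add_one, lucasU_two_mul_add_two, lucasU_add_two]
    ring

theorem lucasU_add_four (n : ℕ) :
    lucasU A B (n + 4) = (A ^ 2 - 2 * B) * lucasU A B (n + 2) - B ^ 2 * lucasU A B n := by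
  rw [lucasU_add_two A B (n + 2), lucasU_add_two A B (n + 1), lucasU_add_two A B n]
  ring

theorem lucasU_two_mul_eq_mul_lucasU (n : ℕ) :
    lucasU A B (2 * n) = A * lucasU (A ^ 2 - 2 * B) (B ^ 2) n := by
  induction n using Nat.twoStepInduction with
  | zero => simp [lucasU]
  | one => simp [lucasU]
  | more n ih ih' =>
    rw [mul_add, lucasU_add_four, ← mul_add_one, ih, ih', lucasU_add_two]
    ring

theorem lucasU_two_mul_add_one_eq_add (n : ℕ) :
    lucasU A B (2 * n + 1) =
      lucasU (A ^ 2 - 2 * B) (B ^ 2) (n + 1) + B * lucasU (A ^ 2 - 2 * B) (B ^ 2) n := by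
  induction n using Nat.twoStepInduction with
  | zero => simp [lucasU]
  | one =>
    simp only [mul_one, lucasU]
    ring
  | more n ih ih' =>
    rw [show 2 * (n + 2) + 1 = 2 * n + 1 + 4 by ring, lucasU_add_four,
      show 2 * n + 1 + 2 = 2 * (n + 1) + 1 by ring, ih, ih', lucasU_add_two _ _ (n + 1),
      lucasU_add_two _ _ n]
    ring

theorem lucasU_mul_sq_mul_add_one (c : ℤ) (n : ℕ) :
    lucasU (c * A) (c ^ 2 * B) (n + 1) = c ^ n * lucasU A B (n + 1) := by
  induction n using Nat.twoStepInduction with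
  | zero => simp [lucasU]
  | one => simp [lucasU]
  | more n ih ih' =>
    rw [lucasU_add_two _ _ (n + 1), lucasU_add_two _ _ (n + 1), ih, ih']
    ring

theorem mul_lucasU_mul_sq_mul (c : ℤ) (n : ℕ) :
    c * lucasU (c * A) (c ^ 2 * B) n = c ^ n * lucasU A B n := by
  cases n with
  | zero => simp [lucasU]
  | succ n => rw [lucasU_mul_sq_mul_add_one, pow_succ', mul_assoc]

end Identities

theorem lucasU_self_two_mul_add_one (m : ℤ) (k : ℕ) :
    lucasU m m (2 * k + 1) = m ^ k * (lucasU (m - 2) 1 (k + 1) + lucasU (m - 2) 1 k) := by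
  rw [lucasU_two_mul_add_one_eq_add, show m ^ 2 - 2 * m = m * (m - 2) by ring,
    ← mul_one (m ^ 2), lucasU_mul_sq_mul_add_one, mul_lucasU_mul_sq_mul, mul_add]

theorem lucasU_self_two_mul_add_two (m : ℤ) (k : ℕ) :
    lucasU m m (2 * k + 2) = m ^ (k + 1) * lucasU (m - 2) 1 (k + 1) := by
  rw [← mul_add_one, lucasU_two_mul_eq_mul_lucasU, show m ^ 2 - 2 * m = m * (m - 2) by ring,
    ← mul_one (m ^ 2), mul_lucasU_mul_sq_mul]

section PrimePower

variable {p : ℕ} [Fact p.Prime]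

theorem pow_half_prime_pow_modEq_jacobiSym (hp2 : p ≠ 2) (D : ℤ) (a : ℕ) :
    D ^ (p ^ a / 2) ≡ jacobiSym D (p ^ a) [ZMOD p] := by
  have hodd : Odd p := Fact.out (p := p.Prime).odd_of_ne_two hp2
  rw [← ZMod.intCast_eq_intCast_iff, Int.cast_pow]
  induction a with
  | zero => simp
  | succ a ih =>
    have hhalf : p ^ (a + 1) / 2 = p ^ a / 2 * p + p / 2 := by
      obtain ⟨j, hj⟩ : Odd (p ^ a) := hodd.pow
      rw [pow_succ, hj, show (2 * j + 1) * p = p + 2 * (j * p) by ring,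
        Nat.add_mul_div_left _ _ two_pos, show (2 * j + 1) / 2 = j by lia, add_comm]
    rw [hhalf, pow_add, pow_mul, ZMod.pow_card, ih, ← legendreSym.eq_pow, pow_succ p a,
      jacobiSym.mul_right, jacobiSym.legendreSym.to_jacobiSym, Int.cast_mul]

theorem sq_pow_half_prime_pow_eq_one {x : ZMod p} (hx : x ≠ 0) {a k : ℕ}
    (hk : p ^ a = 2 * k + 1) : (x ^ k) ^ 2 = 1 := by
  refine mul_right_cancel₀ hx ?_
  rw [one_mul, ← pow_mul', ← pow_succ, ← hk, ZMod.pow_card_pow]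

theorem pow_prime_pow_succ_modEq (m : ℤ) (b : ℕ) :
    m ^ p ^ (b + 1) ≡ m ^ p [ZMOD (p : ℤ) ^ 2] := by
  have hfermat : m ^ p ^ b ≡ m [ZMOD p] := by
    rw [← ZMod.intCast_eq_intCast_iff, Int.cast_pow, ZMod.pow_card_pow]
  simpa only [pow_one, one_add_one_eq_two, ← pow_mul, ← pow_succ] using
    (Int.modEq_iff_dvd.2 (dvd_sub_pow_of_dvd_sub hfermat.symm.dvd 1)).symm

theorem sq_pow_half_prime_pow_modEq {m : ℤ} (hm : ¬(p : ℤ) ∣ m) {a k : ℕ} (ha : 0 < a)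
    (hk : p ^ a = 2 * k + 1) : (m ^ k) ^ 2 ≡ m ^ (p - 1) [ZMOD (p : ℤ) ^ 2] := by
  obtain ⟨b, rfl⟩ := Nat.exists_eq_add_of_lt ha
  have hp : p.Prime := Fact.out
  have hcop : IsCoprime ((p : ℤ) ^ 2) m :=
    ((Nat.prime_iff_prime_int.1 hp).coprime_iff_not_dvd.2 hm).pow_left
  refine Int.modEq_iff_dvd.2 (hcop.dvd_of_dvd_mul_right ?_)
  have h := (pow_prime_pow_succ_modEq (p := p) m b).dvd
  rw [zero_add] at hk
  rwa [sub_mul, ← pow_succ, Nat.sub_add_cancel hp.one_le, ← pow_mul', ← pow_succ, ← hk]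

end PrimePower

section Frobenius

open QuadraticAlgebra

theorem omega_pow_eq_lucasU (R : Type*) [CommRing R] (A B : ℤ) (n : ℕ) :
    (ω : QuadraticAlgebra R (-B) A) ^ n =
      ⟨lucasU A B (n + 1) - A * lucasU A B n, lucasU A B n⟩ := by
  induction n with
  | zero => ext <;> simp [lucasU]
  | succ n ih =>
    rw [pow_succ', ih, omega_mul_mk, lucasU_add_two]
    ext <;> push_cast <;> ring

variable {p : ℕ} [Fact p.Prime]

theorem two_mul_pow_prime_pow_sub_of_sq_eq {R : Type*} [CommRing R] [CharP R p] (hp2 : p ≠ 2)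
    {A B : ℤ} {x : R} (hx : x ^ 2 = A * x - B) (a : ℕ) :
    2 * x ^ p ^ a - A = jacobiSym (A ^ 2 - 4 * B) (p ^ a) * (2 * x - A) := by
  have hodd : Odd (p ^ a) := (Fact.out (p := p.Prime).odd_of_ne_two hp2).pow
  have hsq : (2 * x - A) ^ 2 = ((A ^ 2 - 4 * B : ℤ) : R) := by
    push_cast
    linear_combination 4 * hx
  have heuler : ((A ^ 2 - 4 * B : ℤ) : R) ^ (p ^ a / 2) = jacobiSym (A ^ 2 - 4 * B) (p ^ a) := by
    rw [← Int.cast_pow, CharP.intCast_eq_intCast R p]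
    exact pow_half_prime_pow_modEq_jacobiSym hp2 _ a
  calc 2 * x ^ p ^ a - A
      = (2 * x - A) ^ p ^ a := by
        simp only [← iterateFrobenius_def, map_sub, map_mul, map_ofNat, map_intCast]
    _ = ((2 * x - A) ^ 2) ^ (p ^ a / 2) * (2 * x - A) := by
        rw [← pow_mul, ← pow_succ, Nat.two_mul_div_two_add_one_of_odd hodd]
    _ = jacobiSym (A ^ 2 - 4 * B) (p ^ a) * (2 * x - A) := by rw [hsq, heuler]

theorem two_mul_omega_pow_prime_pow_sub (hp2 : p ≠ 2) (A B : ℤ) (a : ℕ) :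
    2 * (ω : QuadraticAlgebra (ZMod p) (-B) A) ^ p ^ a - A =
      jacobiSym (A ^ 2 - 4 * B) (p ^ a) * (2 * (ω : QuadraticAlgebra (ZMod p) (-B) A) - A) := by
  have : CharP (QuadraticAlgebra (ZMod p) (-B) A) p :=
    charP_of_injective_algebraMap algebraMap_injective p
  refine two_mul_pow_prime_pow_sub_of_sq_eq hp2 ?_ a
  rw [sq, omega_mul_omega_eq_mk]
  ext <;> simp

theorem lucasU_prime_pow_eq_jacobiSym (hp2 : p ≠ 2) (A B : ℤ) (a : ℕ) :
    (lucasU A B (p ^ a) : ZMod p) = (jacobiSym (A ^ 2 - 4 * B) (p ^ a) : ZMod p) := by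
  have h2 : (2 : ZMod p) ≠ 0 := Ring.two_ne_zero ((ZMod.ringChar_zmod_n p).trans_ne hp2)
  have him := congrArg im (two_mul_omega_pow_prime_pow_sub hp2 A B a)
  have him' : (2 * lucasU A B (p ^ a) : ZMod p) = jacobiSym (A ^ 2 - 4 * B) (p ^ a) * 2 := by
    simpa [omega_pow_eq_lucasU] using him
  exact mul_left_cancel₀ h2 (him'.trans (mul_comm _ _))

theorem two_mul_lucasU_prime_pow_add_one_eq (hp2 : p ≠ 2) (A B : ℤ) (a : ℕ) :
    (2 * lucasU A B (p ^ a + 1) : ZMod p) = A * (1 + jacobiSym (A ^ 2 - 4 * B) (p ^ a)) := by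
  have hre := congrArg re (two_mul_omega_pow_prime_pow_sub hp2 A B a)
  have hre' : (2 * (lucasU A B (p ^ a + 1) - A * lucasU A B (p ^ a)) - A : ZMod p) =
      -(jacobiSym (A ^ 2 - 4 * B) (p ^ a) * A) := by
    simpa [omega_pow_eq_lucasU] using hre
  linear_combination hre' + 2 * A * lucasU_prime_pow_eq_jacobiSym hp2 A B a

end Frobenius

section HalfIndex

variable {p : ℕ} [Fact p.Prime] {a k : ℕ} {m : ℤ}

theorem lucasU_add_modEq_jacobiSym_mul_pow (hp2 : p ≠ 2) (hm : ¬(p : ℤ) ∣ m)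
    (hk : p ^ a = 2 * k + 1) :
    lucasU (m - 2) 1 (k + 1) + lucasU (m - 2) 1 k ≡
      jacobiSym (m ^ 2 - 4 * m) (p ^ a) * m ^ k [ZMOD p] := by
  rw [← ZMod.intCast_eq_intCast_iff]
  have hw := sq_pow_half_prime_pow_eq_one (mt (ZMod.intCast_zmod_eq_zero_iff_dvd m p).1 hm) hk
  have hu := lucasU_prime_pow_eq_jacobiSym hp2 m m a
  rw [hk, lucasU_self_two_mul_add_one] at hu
  rw [hk]
  push_cast at hu ⊢
  linear_combination (m : ZMod p) ^ k * hu - (lucasU (m - 2) 1 (k + 1) + lucasU (m - 2) 1 k) * hw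

theorem lucasU_sub_modEq_pow (hp2 : p ≠ 2) (hm : ¬(p : ℤ) ∣ m) (hk : p ^ a = 2 * k + 1) :
    lucasU (m - 2) 1 (k + 1) - lucasU (m - 2) 1 k ≡ m ^ k [ZMOD p] := by
  rw [← ZMod.intCast_eq_intCast_iff]
  have hm' : (m : ZMod p) ≠ 0 := mt (ZMod.intCast_zmod_eq_zero_iff_dvd m p).1 hm
  have hw := sq_pow_half_prime_pow_eq_one hm' hk
  have hu := lucasU_prime_pow_eq_jacobiSym hp2 m m a
  have hu' := two_mul_lucasU_prime_pow_add_one_eq hp2 m m a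
  rw [hk, lucasU_self_two_mul_add_one] at hu
  rw [hk, lucasU_self_two_mul_add_two] at hu'
  push_cast at hu hu' ⊢
  have hx : (2 * m ^ k * lucasU (m - 2) 1 (k + 1) : ZMod p) =
      1 + jacobiSym (m ^ 2 - 4 * m) (2 * k + 1) :=
    mul_left_cancel₀ hm' (by linear_combination hu')
  linear_combination (m : ZMod p) ^ k * (hx - hu) -
    (lucasU (m - 2) 1 (k + 1) - lucasU (m - 2) 1 k) * hw

end HalfIndex

section SquareModulus

variable {n A w : ℤ} {k : ℕ}

theorem two_mul_sub_lucasU_modEq_of_dvd_add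
    (hs : n ∣ lucasU A 1 (k + 1) + lucasU A 1 k)
    (hd : n ∣ lucasU A 1 (k + 1) - lucasU A 1 k - w) :
    2 * (w * (lucasU A 1 (k + 1) + lucasU A 1 k)) - lucasU A 1 (2 * k + 1) ≡
      lucasU A 1 (2 * k + 1) [ZMOD n ^ 2] := by
  have hdvd : n ^ 2 ∣ 2 * ((lucasU A 1 (k + 1) + lucasU A 1 k) *
      (lucasU A 1 (k + 1) - lucasU A 1 k - w)) := by
    rw [sq]
    exact (mul_dvd_mul hs hd).mul_left 2
  rw [Int.modEq_iff_dvd, lucasU_two_mul_add_one]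
  convert hdvd using 1
  ring

theorem two_mul_sub_lucasU_modEq_of_dvd_lucasU (hy : n ∣ lucasU A 1 k)
    (hs : n ∣ lucasU A 1 (k + 1) + lucasU A 1 k - w) :
    2 * (w * (lucasU A 1 (k + 1) + lucasU A 1 k)) - lucasU A 1 (2 * k + 1) ≡
      w ^ 2 + lucasU A 1 (2 * k) [ZMOD n ^ 2] := by
  have hdvd : n ^ 2 ∣ (lucasU A 1 (k + 1) + lucasU A 1 k - w) ^ 2 - (A + 2) * lucasU A 1 k ^ 2 :=
    dvd_sub (pow_dvd_pow_of_dvd hs 2) ((pow_dvd_pow_of_dvd hy 2).mul_left _)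
  rw [Int.modEq_iff_dvd, lucasU_two_mul_add_one, lucasU_two_mul]
  convert hdvd using 1
  ring

theorem two_mul_sub_lucasU_modEq_of_dvd_lucasU_succ (hx : n ∣ lucasU A 1 (k + 1))
    (hs : n ∣ lucasU A 1 (k + 1) + lucasU A 1 k + w) :
    2 * (w * (lucasU A 1 (k + 1) + lucasU A 1 k)) - lucasU A 1 (2 * k + 1) ≡
      -w ^ 2 + lucasU A 1 (2 * k + 2) [ZMOD n ^ 2] := by
  have hdvd : n ^ 2 ∣
      (A + 2) * lucasU A 1 (k + 1) ^ 2 - (lucasU A 1 (k + 1) + lucasU A 1 k + w) ^ 2 :=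
    dvd_sub ((pow_dvd_pow_of_dvd hx 2).mul_left _) (pow_dvd_pow_of_dvd hs 2)
  rw [Int.modEq_iff_dvd, lucasU_two_mul_add_one, lucasU_two_mul_add_two]
  convert hdvd using 1
  ring

theorem two_mul_sub_lucasU_modEq {ε : ℤ} (hn : IsCoprime n 2) (hε : ε = 0 ∨ ε = 1 ∨ ε = -1)
    (hs : lucasU A 1 (k + 1) + lucasU A 1 k ≡ ε * w [ZMOD n])
    (hd : lucasU A 1 (k + 1) - lucasU A 1 k ≡ w [ZMOD n]) :
    2 * (w * (lucasU A 1 (k + 1) + lucasU A 1 k)) - lucasU A 1 (2 * k + 1) ≡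
      ε * w ^ 2 + lucasU A 1 (2 * k + 1 - ε).toNat [ZMOD n ^ 2] := by
  have hs' := hs.symm.dvd
  have hd' := hd.symm.dvd
  rcases hε with rfl | rfl | rfl
  · rw [zero_mul, zero_add, show (2 * (k : ℤ) + 1 - 0).toNat = 2 * k + 1 by lia]
    exact two_mul_sub_lucasU_modEq_of_dvd_add (by simpa using hs') hd'
  · have hy : n ∣ lucasU A 1 k := hn.dvd_of_dvd_mul_left (by convert dvd_sub hs' hd' using 1; ring)
    rw [one_mul, show (2 * (k : ℤ) + 1 - 1).toNat = 2 * k by lia]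
    exact two_mul_sub_lucasU_modEq_of_dvd_lucasU hy (by simpa using hs')
  · have hx : n ∣ lucasU A 1 (k + 1) :=
      hn.dvd_of_dvd_mul_left (by convert dvd_add hs' hd' using 1; ring)
    rw [neg_one_mul, show (2 * (k : ℤ) + 1 - -1).toNat = 2 * k + 2 by lia]
    exact two_mul_sub_lucasU_modEq_of_dvd_lucasU_succ hx (by simpa using hs')

end SquareModulus

theorem stmt19 (p : ℕ) (hp : p.Prime) (hp2 : p ≠ 2) (a : ℕ) (ha : 0 < a)
    (m : ℤ) (hm : ¬ (p : ℤ) ∣ m) (Δ : ℤ) (hΔ : Δ = m ^ 2 - 4 * m) :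
    2 * lucasU m m (p ^ a) - lucasU (m - 2) 1 (p ^ a) ≡
      jacobiSym Δ (p ^ a) * m ^ (p - 1) +
        lucasU (m - 2) 1 (((p : ℤ) ^ a - jacobiSym Δ (p ^ a)).toNat)
      [ZMOD (p : ℤ) ^ 2] := by
  have : Fact p.Prime := ⟨hp⟩
  have hodd : Odd p := hp.odd_of_ne_two hp2
  obtain ⟨k, hk⟩ : Odd (p ^ a) := hodd.pow
  have hkz : (p : ℤ) ^ a = 2 * k + 1 := mod_cast hk
  have hcop : IsCoprime (p : ℤ) 2 := Nat.isCoprime_iff_coprime.2 hodd.coprime_two_right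
  have hs := lucasU_add_modEq_jacobiSym_mul_pow hp2 hm hk
  have hd := lucasU_sub_modEq_pow hp2 hm hk
  have hw := sq_pow_half_prime_pow_modEq hm ha hk
  rw [← hΔ] at hs
  rw [hk] at hs ⊢
  rw [hkz, lucasU_self_two_mul_add_one]
  exact (two_mul_sub_lucasU_modEq hcop (jacobiSym.trichotomy Δ _) hs hd).trans
    ((hw.mul_left _).add_right _)
end
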